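/- There exist constants c, c' > 0 such that for all sufficiently large n: 2^{c·(log n)²} ≤ r(K_5^(3) − e, S_n) ≤ 2^{c'·n^{2/3}·log n}. -/

import Mathlib

/-- A red copy of `K₅⁽³⁾ − e`: a 5-element vertex set with at least nine of its ten
3-element subsets red (red = `true`). -/
def HasRedK5e (N : ℕ) (χ : Finset (Fin N) → Bool) : Prop :=
  ∃ S : Finset (Fin N), S.card = 5 ∧
    9 ≤ ((S.powersetCard 3).filter fun T => χ T = true).card

/-- A blue copy of the star `Sₙ` (blue = `false`). -/
def HasBlueStar (N n : ℕ) (χ : Finset (Fin N) → Bool) : Prop :=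
  ∃ v : Fin N, ∃ S : Finset (Fin N), v ∉ S ∧ S.card = n ∧
    ∀ a ∈ S, ∀ b ∈ S, a ≠ b → χ {v, a, b} = false

/-- The Ramsey number `r(K₅⁽³⁾ − e, Sₙ)`: the least `N` such that every 2-coloring of
`K_N^(3)` contains a red `K₅⁽³⁾ − e` or a blue `Sₙ`. -/
noncomputable def ramseyK5eStar (n : ℕ) : ℕ :=
  sInf {N : ℕ | ∀ χ : Finset (Fin N) → Bool, HasRedK5e N χ ∨ HasBlueStar N n χ}

/-!
Upper bound. In a colouring without a blue `Sₙ`, the graph of red pairs in the link of a vertex has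
no independent set of size `n`. Fix `n ^ s` vertices. By Erdős–Szekeres the red link of every other
vertex contains an `s`-clique among them, and by pigeonhole a large set `Y` of vertices shares one
such clique `K`. In the absence of a red `K₅⁽³⁾ − e` each pair in `Y` belongs to the red links of at
most two vertices of `K`, so some `x ∈ K` has a red link of density at most `2 / s` on `Y`. A sparse
graph without independent `n`-sets has a clique much larger than Ramsey's theorem gives
(Erdős–Szemerédi); a clique of size `n ^ 3` in the red link of `x` contains a triangle of the red
link of another `x' ∈ K`, which together with `x` and `x'` is a red `K₅⁽³⁾ − e`. The choice
`s ≈ n ^ (1 / 3)` balances the cost `n ^ (s ^ 2)` of finding `K` against the cost `n ^ O(n / s)` of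
finding the clique.

Lower bound. The vertices are the bit strings of length `D ^ 2`, with pairwise distinct Reed–Solomon
codewords over a field with `2 ^ D` elements. Every pair of vertices gets a random label, which
prescribes the apexes `a` for which `{a, c, d}` is red. Four vertices never span four red triples:
for the pair `c, d` that differs latest, the label of `{c, d}` makes the codewords of the other two
vertices `a, b` agree where `c` and `d` first differ, and then the label of `{a, b}` forces `c` and
`d` to agree there. Two codewords agree in fewer than `D` places, so a given label constrains few
bits of `a`. Hence a triple whose apex branches off correctly is red with probability at least
`1 / (D ^ 2 * 4 ^ D)`, and a union bound excludes all blue stars of size `2 ^ (6 * D)`.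
-/

section

open Finset

section GraphRamsey

variable {V : Type*} {G : SimpleGraph V}

theorem exists_isNClique_or_isNIndepSet (G : SimpleGraph V) :
    ∀ (a b : ℕ) {W : Finset V}, b ^ a ≤ #W →
      (∃ A ⊆ W, G.IsNClique a A) ∨ ∃ B ⊆ W, G.IsNIndepSet b B
  | 0, _, _, _ => .inl ⟨∅, by simp, by simp⟩
  | _ + 1, 0, _, _ => .inr ⟨∅, by simp, by simp [SimpleGraph.isNIndepSet_iff]⟩
  | a + 1, b + 1, W, hW => by
    classical
    obtain ⟨v, hv⟩ : W.Nonempty := card_pos.mp ((by positivity : 0 < (b + 1) ^ (a + 1)).trans_le hW)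
    have hsplit := card_filter_add_card_filter_not (s := W.erase v) (G.Adj v)
    have hcard := card_erase_add_one hv
    obtain hN | hN : (b + 1) ^ a ≤ #{w ∈ W.erase v | G.Adj v w} ∨
        b ^ (a + 1) ≤ #{w ∈ W.erase v | ¬ G.Adj v w} := by
      have hpow : b ^ a ≤ (b + 1) ^ a := Nat.pow_le_pow_left b.le_succ a
      by_contra! h
      rw [pow_succ] at hW h
      nlinarith
    · obtain ⟨A, hA, hclique⟩ | ⟨B, hB, hindep⟩ := exists_isNClique_or_isNIndepSet G a (b + 1) hN
      · simp only [subset_iff, mem_filter, mem_erase] at hA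
        exact .inl ⟨insert v A, insert_subset hv fun w hw => (hA hw).1.2,
          hclique.insert fun w hw => (hA hw).2⟩
      · exact .inr ⟨B, hB.trans ((filter_subset _ _).trans (erase_subset _ _)), hindep⟩
    · obtain ⟨A, hA, hclique⟩ | ⟨B, hB, hindep⟩ := exists_isNClique_or_isNIndepSet G (a + 1) b hN
      · exact .inl ⟨A, hA.trans ((filter_subset _ _).trans (erase_subset _ _)), hclique⟩
      · simp only [subset_iff, mem_filter, mem_erase] at hB
        refine .inr ⟨insert v B, insert_subset hv fun w hw => (hB hw).1.2, ?_⟩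
        rw [← SimpleGraph.isNClique_compl] at hindep ⊢
        exact hindep.insert fun w hw => ⟨(hB hw).1.1.symm, (hB hw).2⟩

theorem card_le_two_mul_card_filter_le {α : Type*} {Y : Finset α} {f : α → ℕ} {t : ℕ}
    (h : 2 * ∑ y ∈ Y, f y ≤ #Y * t) : #Y ≤ 2 * #{y ∈ Y | f y ≤ t} := by
  have hmarkov : #{y ∈ Y | ¬ f y ≤ t} * (t + 1) ≤ ∑ y ∈ Y, f y := by
    rw [← smul_eq_mul]
    refine (card_nsmul_le_sum _ f _ fun y hy => ?_).trans
      (sum_le_sum_of_subset (filter_subset _ _))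
    exact Nat.lt_of_not_le (mem_filter.mp hy).2
  have hsplit := card_filter_add_card_filter_not (s := Y) (f · ≤ t)
  have : 2 * #{y ∈ Y | ¬ f y ≤ t} ≤ #Y := by
    by_contra hlt
    rw [not_le] at hlt
    nlinarith
  omega

theorem card_filter_card_le_le_pow {α : Type*} (I : Finset α) (m : ℕ) :
    #{S ∈ I.powerset | #S ≤ m} ≤ (#I + 1) ^ m := by
  classical
  calc #{S ∈ I.powerset | #S ≤ m}
      = ∑ i ∈ range (m + 1), #{S ∈ {S ∈ I.powerset | #S ≤ m} | #S = i} :=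
        card_eq_sum_card_fiberwise fun S hS => by
          simpa [Nat.lt_succ_iff] using (mem_filter.mp hS).2
    _ ≤ ∑ i ∈ range (m + 1), #I ^ i * m.choose i := by
        refine sum_le_sum fun i hi => ?_
        calc #{S ∈ {S ∈ I.powerset | #S ≤ m} | #S = i} ≤ #(I.powersetCard i) :=
              card_le_card fun S hS => by
                simp only [mem_filter, mem_powerset] at hS
                exact mem_powersetCard.mpr ⟨hS.1.1, hS.2⟩
          _ ≤ #I ^ i := by rw [card_powersetCard]; exact Nat.choose_le_pow _ _
          _ ≤ #I ^ i * m.choose i :=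
              Nat.le_mul_of_pos_right _ (Nat.choose_pos (Nat.lt_succ_iff.mp (mem_range.mp hi)))
    _ = (#I + 1) ^ m := by simp [add_pow]

theorem card_le_two_mul_card_filter_bipartiteAbove_le {α β : Type*} {r : α → β → Prop}
    [∀ a b, Decidable (r a b)] {s : Finset α} {t : Finset β}
    {d m : ℕ} (hdeg : ∀ b ∈ t, #(s.bipartiteBelow r b) ≤ d) (hm : 2 * (#t * d) ≤ #s * m) :
    #s ≤ 2 * #{a ∈ s | #(t.bipartiteAbove r a) ≤ m} := by
  refine card_le_two_mul_card_filter_le (le_trans (Nat.mul_le_mul_left 2 ?_) hm)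
  rw [sum_card_bipartiteAbove_eq_sum_card_bipartiteBelow]
  exact sum_le_card_nsmul _ _ _ hdeg

/-- An independent `(m + 1)`-subset `J` of `U` could replace the at most `m` elements of `S` in the
maximum independent set `I`. -/
theorem exists_isNClique_of_filter_adj_eq [DecidableRel G.Adj]
    {D I S U : Finset V} {k m : ℕ} (hID : I ⊆ D) (hI : G.IsIndepSet (I : Set V))
    (hmax : ∀ J ⊆ D, G.IsIndepSet (J : Set V) → #J ≤ #I) (hUD : U ⊆ D) (hUI : Disjoint I U)
    (hU : ∀ y ∈ U, ({x ∈ I | G.Adj y x} : Finset V) = S) (hS : #S ≤ m) (hcard : k ^ (m + 1) ≤ #U) :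
    ∃ A ⊆ U, G.IsNClique k A := by
  classical
  obtain ⟨J, hJU, hJ⟩ | ⟨A, hAU, hA⟩ := exists_isNClique_or_isNIndepSet Gᶜ (m + 1) k hcard
  · rw [SimpleGraph.isNClique_compl] at hJ
    have hcross : ∀ x ∈ I \ S, ∀ y ∈ J, ¬ G.Adj x y := fun x hx y hy hxy => by
      rw [mem_sdiff, ← hU y (hJU hy)] at hx
      exact hx.2 (mem_filter.mpr ⟨hx.1, hxy.symm⟩)
    have hindep : G.IsIndepSet ((I \ S ∪ J : Finset V) : Set V) := by
      rw [coe_union, SimpleGraph.isIndepSet_iff, Set.pairwise_union]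
      exact ⟨hI.mono (coe_subset.mpr sdiff_subset), hJ.isIndepSet,
        fun x hx y hy _ => ⟨hcross x hx y hy, fun h => hcross x hx y hy h.symm⟩⟩
    have hle := hmax _ (union_subset (sdiff_subset.trans hID) (hJU.trans hUD)) hindep
    rw [card_union_of_disjoint (hUI.mono sdiff_subset hJU), hJ.card_eq] at hle
    have := le_card_sdiff S I
    omega
  · exact ⟨A, hAU, by simpa using hA⟩

theorem exists_isNClique_of_degree_le [DecidableRel G.Adj] {D : Finset V}
    {d k m n : ℕ} (hdeg : ∀ x ∈ D, #{y ∈ D | G.Adj x y} ≤ d) (hfree : G.IndepSetFreeOn D n)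
    (hm : 2 * (n * d) ≤ #D * m) (hcard : 2 * (n ^ m * k ^ (m + 1) + n) ≤ #D) :
    ∃ A ⊆ D, G.IsNClique k A := by
  classical
  obtain ⟨I, hI, hmax⟩ := exists_max_image
    (D.powerset.filter fun J : Finset V => G.IsIndepSet (J : Set V)) card
    ⟨∅, by simp [SimpleGraph.isIndepSet_iff]⟩
  simp only [mem_filter, mem_powerset, and_imp] at hI hmax
  obtain ⟨hID, hI⟩ := hI
  have hIn : #I < n := by
    by_contra! hn
    obtain ⟨B, hBI, hB⟩ := exists_subset_card_eq hn
    exact hfree (coe_subset.mpr (hBI.trans hID)) ⟨hI.mono (coe_subset.mpr hBI), hB⟩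
  set P : Finset V := {y ∈ D | #{x ∈ I | G.Adj y x} ≤ m} with hP
  have hDP : #D ≤ 2 * #P := card_le_two_mul_card_filter_bipartiteAbove_le (r := G.Adj)
    (fun x hx => by simpa only [bipartiteBelow, G.adj_comm] using hdeg x (hID hx))
    (le_trans (by gcongr) hm)
  have hPI : n ^ m * k ^ (m + 1) ≤ #(P \ I) := by
    have := le_card_sdiff I P
    omega
  have hsets : #{S ∈ I.powerset | #S ≤ m} ≤ n ^ m :=
    (card_filter_card_le_le_pow I m).trans (Nat.pow_le_pow_left hIn m)
  obtain ⟨S, hS, hU⟩ := exists_le_card_fiber_of_mul_le_card_of_maps_to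
    (s := P \ I) (t := {S ∈ I.powerset | #S ≤ m}) (f := fun y => {x ∈ I | G.Adj y x})
    (fun y hy => by
      simp only [hP, mem_sdiff, mem_filter] at hy
      simpa using hy.1.2)
    ⟨∅, by simp⟩ ((Nat.mul_le_mul_right _ hsets).trans hPI)
  set U : Finset V := {y ∈ P \ I | ({x ∈ I | G.Adj y x} : Finset V) = S}
  have hUP : U ⊆ P \ I := filter_subset _ _
  have hUD : U ⊆ D := hUP.trans (sdiff_subset.trans (filter_subset _ _))
  obtain ⟨A, hAU, hA⟩ := exists_isNClique_of_filter_adj_eq hID hI hmax hUD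
    (disjoint_sdiff.mono_right hUP) (fun y hy => (mem_filter.mp hy).2) (mem_filter.mp hS).2 hU
  exact ⟨A, hAU.trans hUD, hA⟩

theorem exists_isNClique_of_sum_degree_le [DecidableRel G.Adj] {Y : Finset V}
    {c k m n s : ℕ} (hs : 0 < s) (hdeg : s * ∑ y ∈ Y, #{w ∈ Y | G.Adj y w} ≤ c * #Y ^ 2)
    (hfree : G.IndepSetFreeOn Y n) (hm : 8 * c * n ≤ s * m)
    (hcard : 4 * (n ^ m * k ^ (m + 1) + n) ≤ #Y) :
    ∃ A ⊆ Y, G.IsNClique k A := by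
  set D : Finset V := {y ∈ Y | s * #{w ∈ Y | G.Adj y w} ≤ 2 * c * #Y}
  have hDY : D ⊆ Y := filter_subset _ _
  have hYD : #Y ≤ 2 * #D := card_le_two_mul_card_filter_le (by rw [← mul_sum]; nlinarith)
  have hdegD : ∀ x ∈ D, #{y ∈ D | G.Adj x y} ≤ 2 * c * #Y / s := fun x hx => by
    rw [Nat.le_div_iff_mul_le hs, mul_comm]
    exact le_trans (by gcongr) (mem_filter.mp hx).2
  have hmD : 2 * (n * (2 * c * #Y / s)) ≤ #D * m := by
    refine Nat.le_of_mul_le_mul_left ?_ hs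
    calc s * (2 * (n * (2 * c * #Y / s))) = 2 * n * (s * (2 * c * #Y / s)) := by ring
      _ ≤ 2 * n * (2 * c * #Y) := Nat.mul_le_mul_left _ (Nat.mul_div_le _ _)
      _ ≤ 2 * n * (2 * c * (2 * #D)) := by gcongr
      _ = #D * (8 * c * n) := by ring
      _ ≤ #D * (s * m) := by gcongr
      _ = s * (#D * m) := by ring
  obtain ⟨A, hAD, hA⟩ := exists_isNClique_of_degree_le (k := k) hdegD
    (fun B hB => hfree (hB.trans (coe_subset.mpr hDY))) hmD (by omega)
  exact ⟨A, hAD.trans hDY, hA⟩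

end GraphRamsey

section Link

/-- The link graph of `v` in red: `a` and `b` are adjacent when `{v, a, b}` is red. The vertex `v`
is not removed, so red pairs containing `v` may contribute edges at `v`. -/
def redLink {V : Type*} [DecidableEq V] (χ : Finset V → Bool) (v : V) : SimpleGraph V where
  Adj a b := a ≠ b ∧ χ {v, a, b} = true
  symm := ⟨fun a b h => ⟨h.1.symm, pair_comm a b ▸ h.2⟩⟩

instance {V : Type*} [DecidableEq V] (χ : Finset V → Bool) (v : V) :
    DecidableRel (redLink χ v).Adj :=
  fun _ _ => inferInstanceAs (Decidable (_ ∧ _))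

variable {N : ℕ} {χ : Finset (Fin N) → Bool}

theorem eq_true_of_isClique_redLink {v : Fin N} {A U : Finset (Fin N)}
    (hA : (redLink χ v).IsClique A) (hv : v ∈ U) (hU : #U = 3) (hUA : U.erase v ⊆ A) :
    χ U = true := by
  obtain ⟨a, b, hab, hpair⟩ := card_eq_two.mp (by rw [card_erase_of_mem hv, hU] : #(U.erase v) = 2)
  rw [← insert_erase hv, hpair]
  exact (hA (hUA (by simp [hpair])) (hUA (by simp [hpair])) hab).2

theorem hasRedK5e_of_isNClique_redLink {x y : Fin N} {T : Finset (Fin N)} (hxy : x ≠ y)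
    (hxT : x ∉ T) (hyT : y ∉ T) (hx : (redLink χ x).IsNClique 3 T)
    (hy : (redLink χ y).IsNClique 3 T) (hT : ∀ t ∈ T, χ {x, y, t} = true) : HasRedK5e N χ := by
  have hS : #(insert x (insert y T)) = 5 := by
    rw [card_insert_of_notMem (by simp [hxy, hxT]), card_insert_of_notMem hyT, hx.card_eq]
  have hTS : T ∈ (insert x (insert y T)).powersetCard 3 :=
    mem_powersetCard.mpr ⟨fun _ ht => by simp [ht], hx.card_eq⟩
  refine ⟨insert x (insert y T), hS, ?_⟩
  calc 9 = #(((insert x (insert y T)).powersetCard 3).erase T) := by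
        rw [card_erase_of_mem hTS, card_powersetCard, hS]
        rfl
    _ ≤ _ := card_le_card fun U hU => ?_
  obtain ⟨hne, hU⟩ := mem_erase.mp hU
  refine mem_filter.mpr ⟨hU, ?_⟩
  obtain ⟨hUS, hU3⟩ := mem_powersetCard.mp hU
  by_cases hxU : x ∈ U <;> by_cases hyU : y ∈ U
  · have hyU' : y ∈ U.erase x := mem_erase.mpr ⟨hxy.symm, hyU⟩
    obtain ⟨t, ht⟩ := card_eq_one.mp
      (by rw [card_erase_of_mem hyU', card_erase_of_mem hxU, hU3] : #((U.erase x).erase y) = 1)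
    rw [← insert_erase hxU, ← insert_erase hyU', ht]
    have htU : t ∈ (U.erase x).erase y := by simp [ht]
    simp only [mem_erase] at htU
    exact hT t (by simpa [htU] using hUS htU.2.2)
  · refine eq_true_of_isClique_redLink hx.isClique hxU hU3 ?_
    rw [← subset_insert_iff]
    exact (subset_insert_iff_of_notMem hyU).mp (by rwa [insert_comm])
  · refine eq_true_of_isClique_redLink hy.isClique hyU hU3 ?_
    rw [← subset_insert_iff]
    exact (subset_insert_iff_of_notMem hxU).mp hUS
  · rw [subset_insert_iff_of_notMem hxU, subset_insert_iff_of_notMem hyU] at hUS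
    exact absurd (eq_of_subset_of_card_le hUS (by rw [hx.card_eq, hU3])) hne

theorem indepSetFreeOn_redLink {n : ℕ} (hstar : ¬ HasBlueStar N n χ) {v : Fin N}
    {Y : Finset (Fin N)} (hv : v ∉ Y) : (redLink χ v).IndepSetFreeOn Y n :=
  fun B hB hindep => hstar ⟨v, B, fun h => hv (hB h), hindep.card_eq, fun a ha b hb hab => by
    simpa [redLink, hab] using hindep.isIndepSet ha hb hab⟩

theorem exists_isNClique_redLink {n k : ℕ} (hstar : ¬ HasBlueStar N n χ) {v : Fin N}
    {Y : Finset (Fin N)} (hv : v ∉ Y) (hY : n ^ k ≤ #Y) :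
    ∃ A ⊆ Y, (redLink χ v).IsNClique k A :=
  (exists_isNClique_or_isNIndepSet _ k n hY).resolve_right fun ⟨_, hB, hindep⟩ =>
    indepSetFreeOn_redLink hstar hv (coe_subset.mpr hB) hindep

theorem exists_common_isNClique_redLink {n s L : ℕ} (hstar : ¬ HasBlueStar N n χ)
    (hN : n ^ s + (n ^ s) ^ s * L < N) :
    ∃ K Y : Finset (Fin N), L < #Y ∧ Disjoint K Y ∧ ∀ y ∈ Y, (redLink χ y).IsNClique s K := by
  obtain ⟨X, -, hX⟩ := exists_subset_card_eq (s := (univ : Finset (Fin N))) (n := n ^ s)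
    (by rw [card_univ, Fintype.card_fin]; omega)
  have hclique : ∀ y ∈ Xᶜ, ∃ K ⊆ X, (redLink χ y).IsNClique s K := fun y hy =>
    exists_isNClique_redLink hstar (mem_compl.mp hy) hX.ge
  choose! K hKX hK using hclique
  obtain ⟨K₀, hK₀, hL⟩ := exists_lt_card_fiber_of_mul_lt_card_of_maps_to (n := L)
    (fun y hy => mem_powersetCard.mpr ⟨hKX y hy, (hK y hy).card_eq⟩) (by
      have := Nat.mul_le_mul_right L (Nat.choose_le_pow (n ^ s) s)
      rw [card_powersetCard, card_compl, hX, Fintype.card_fin]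
      omega)
  refine ⟨K₀, {y ∈ Xᶜ | K y = K₀}, hL, ?_, fun y hy => ?_⟩
  · exact disjoint_compl_right.mono (mem_powersetCard.mp hK₀).1 (filter_subset _ _)
  · obtain ⟨hyX, rfl⟩ := mem_filter.mp hy
    exact hK y hyX

theorem card_filter_adj_redLink_le_two (hK5 : ¬ HasRedK5e N χ) {K : Finset (Fin N)} {y w : Fin N}
    (hyK : y ∉ K) (hwK : w ∉ K) (hy : (redLink χ y).IsClique K) (hw : (redLink χ w).IsClique K) :
    #{x ∈ K | (redLink χ x).Adj y w} ≤ 2 := by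
  by_contra! h
  obtain ⟨T, hT, hT3⟩ := exists_subset_card_eq h
  have hTK : T ⊆ K := hT.trans (filter_subset _ _)
  have hadj : ∀ x ∈ T, (redLink χ x).Adj y w := fun x hx => (mem_filter.mp (hT hx)).2
  obtain ⟨t, ht⟩ := card_pos.mp (by omega : 0 < #T)
  refine hK5 (hasRedK5e_of_isNClique_redLink (hadj t ht).1 (fun h => hyK (hTK h))
    (fun h => hwK (hTK h)) ⟨hy.subset (coe_subset.mpr hTK), hT3⟩
    ⟨hw.subset (coe_subset.mpr hTK), hT3⟩ fun x hx => ?_)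
  rw [pair_comm, insert_comm]
  exact (hadj x hx).2

theorem exists_sum_degree_redLink_le (hK5 : ¬ HasRedK5e N χ) {K Y : Finset (Fin N)}
    (hK : K.Nonempty) (hKY : Disjoint K Y) (hclique : ∀ y ∈ Y, (redLink χ y).IsClique K) :
    ∃ x ∈ K, #K * ∑ y ∈ Y, #{w ∈ Y | (redLink χ x).Adj y w} ≤ 2 * #Y ^ 2 := by
  refine exists_le_of_sum_le hK ?_
  have hYK : ∀ y ∈ Y, y ∉ K := fun _ hy => disjoint_right.mp hKY hy
  rw [← mul_sum, sum_const, smul_eq_mul]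
  refine Nat.mul_le_mul_left _ ?_
  calc ∑ x ∈ K, ∑ y ∈ Y, #{w ∈ Y | (redLink χ x).Adj y w}
      = ∑ y ∈ Y, ∑ w ∈ Y, #{x ∈ K | (redLink χ x).Adj y w} := by
        simp only [card_filter]
        rw [sum_comm]
        exact sum_congr rfl fun _ _ => sum_comm
    _ ≤ ∑ y ∈ Y, ∑ w ∈ Y, 2 := sum_le_sum fun y hy => sum_le_sum fun w hw =>
        card_filter_adj_redLink_le_two hK5 (hYK y hy) (hYK w hw) (hclique y hy) (hclique w hw)
    _ = 2 * #Y ^ 2 := by simp only [sum_const, smul_eq_mul]; ring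

theorem hasRedK5e_or_hasBlueStar {n s m : ℕ} (hs : 2 ≤ s) (hm : 16 * n ≤ s * m)
    (hN : n ^ s + (n ^ s) ^ s * (4 * (n ^ m * (n ^ 3) ^ (m + 1) + n)) < N)
    (χ : Finset (Fin N) → Bool) : HasRedK5e N χ ∨ HasBlueStar N n χ := by
  by_contra! h
  obtain ⟨hK5, hstar⟩ := h
  obtain ⟨K, Y, hY, hKY, hclique⟩ := exists_common_isNClique_redLink hstar hN
  obtain ⟨y, hy⟩ := card_pos.mp (Nat.zero_lt_of_lt hY)
  have hKs : #K = s := (hclique y hy).card_eq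
  have hnotMem : ∀ x ∈ K, x ∉ Y := fun _ hx => disjoint_left.mp hKY hx
  obtain ⟨x, hx, hdeg⟩ := exists_sum_degree_redLink_le hK5 (card_pos.mp (by omega)) hKY
    fun y hy => (hclique y hy).isClique
  obtain ⟨A, hAY, hA⟩ := exists_isNClique_of_sum_degree_le (k := n ^ 3) (by omega) hdeg
    (indepSetFreeOn_redLink hstar (hnotMem x hx)) (by rwa [hKs]) hY.le
  obtain ⟨x', hx', hne⟩ := exists_mem_ne (by omega : 1 < #K) x
  obtain ⟨T, hTA, hT⟩ := exists_isNClique_redLink (k := 3) hstar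
    (fun h => hnotMem x' hx' (hAY h)) hA.card_eq.ge
  have hTY : T ⊆ Y := hTA.trans hAY
  refine hK5 (hasRedK5e_of_isNClique_redLink hne.symm (fun h => hnotMem x hx (hTY h))
    (fun h => hnotMem x' hx' (hTY h)) ⟨hA.isClique.subset (coe_subset.mpr hTA), hT.card_eq⟩ hT
    fun t ht => ?_)
  rw [pair_comm, insert_comm]
  exact ((hclique t (hTY ht)).isClique hx hx' hne.symm).2

end Link

section RamseyNumber

variable {n : ℕ}

theorem exists_forall_hasRedK5e_or_hasBlueStar (n : ℕ) :
    ∃ N, ∀ χ : Finset (Fin N) → Bool, HasRedK5e N χ ∨ HasBlueStar N n χ :=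
  ⟨_, hasRedK5e_or_hasBlueStar (m := 8 * n) le_rfl (by omega) (Nat.lt_succ_self _)⟩

theorem ramseyK5eStar_le {N : ℕ}
    (h : ∀ χ : Finset (Fin N) → Bool, HasRedK5e N χ ∨ HasBlueStar N n χ) : ramseyK5eStar n ≤ N :=
  Nat.sInf_le h

theorem lt_ramseyK5eStar {M : ℕ}
    (h : ∀ N ≤ M, ∃ χ : Finset (Fin N) → Bool, ¬ HasRedK5e N χ ∧ ¬ HasBlueStar N n χ) :
    M < ramseyK5eStar n := by
  by_contra! hle
  obtain ⟨χ, hred, hblue⟩ := h _ hle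
  exact (Nat.sInf_mem (exists_forall_hasRedK5e_or_hasBlueStar n) χ).elim hred hblue

theorem ramseyK5eStar_le_pow {t : ℕ} (ht : 2 ≤ t) (htn : t ^ 3 ≤ n) (hnt : n < (t + 1) ^ 3) :
    ramseyK5eStar n ≤ n ^ (515 * t ^ 2) := by
  have hn : 8 ≤ n := le_trans (Nat.pow_le_pow_left ht 3) htn
  have hn0 : 0 < n := by omega
  have ht2 : 4 ≤ t ^ 2 := Nat.pow_le_pow_left ht 2
  refine ramseyK5eStar_le (hasRedK5e_or_hasBlueStar ht (m := 128 * t ^ 2) ?_ ?_)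
  · calc 16 * n ≤ 16 * (t + 1) ^ 3 := by gcongr
      _ ≤ 16 * (2 * t) ^ 3 := by gcongr; omega
      _ = t * (128 * t ^ 2) := by ring
  set m := 128 * t ^ 2 with hm
  have hbad : n ^ m * (n ^ 3) ^ (m + 1) + n ≤ n ^ (4 * m + 4) := by
    calc n ^ m * (n ^ 3) ^ (m + 1) + n = n ^ (4 * m + 3) + n ^ 1 := by ring
      _ ≤ n ^ (4 * m + 3) + n ^ (4 * m + 3) := by gcongr; omega
      _ = 2 * n ^ (4 * m + 3) := by ring
      _ ≤ n * n ^ (4 * m + 3) := by gcongr; omega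
      _ = n ^ (4 * m + 4) := by ring
  calc n ^ t + (n ^ t) ^ t * (4 * (n ^ m * (n ^ 3) ^ (m + 1) + n))
      ≤ n ^ t + (n ^ t) ^ t * (4 * n ^ (4 * m + 4)) := by gcongr
    _ = n ^ t + 4 * n ^ (t ^ 2 + 4 * m + 4) := by ring
    _ ≤ n ^ (t ^ 2 + 4 * m + 4) + 4 * n ^ (t ^ 2 + 4 * m + 4) := by
        have : t ≤ t ^ 2 + 4 * m + 4 := by nlinarith
        gcongr
    _ = 5 * n ^ (t ^ 2 + 4 * m + 4) := by ring
    _ < n * n ^ (t ^ 2 + 4 * m + 4) := by gcongr; omega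
    _ = n ^ (t ^ 2 + 4 * m + 5) := by ring
    _ ≤ n ^ (515 * t ^ 2) := by gcongr; omega

theorem ramseyK5eStar_le_rpow (hn : 8 ≤ n) :
    (ramseyK5eStar n : ℝ) ≤ 2 ^ (515 * (n : ℝ) ^ (2 / 3 : ℝ) * Real.logb 2 n) := by
  have hnR : (1 : ℝ) ≤ n := by exact_mod_cast (by omega : 1 ≤ n)
  set t := Nat.nthRoot 3 n
  have htn : t ^ 3 ≤ n := Nat.pow_nthRoot_le (by simp)
  have hnt : n < (t + 1) ^ 3 := Nat.lt_pow_nthRoot_add_one (by simp) n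
  have ht2 : 2 ≤ t := (Nat.le_nthRoot_iff (by simp)).mpr hn
  have hexp : ((515 * t ^ 2 : ℕ) : ℝ) ≤ 515 * (n : ℝ) ^ (2 / 3 : ℝ) := by
    have hcube : (t : ℝ) ^ (3 : ℝ) ≤ n := by exact_mod_cast htn
    have hsq : (t : ℝ) ^ 2 ≤ (n : ℝ) ^ (2 / 3 : ℝ) := by
      calc (t : ℝ) ^ 2 = ((t : ℝ) ^ (3 : ℝ)) ^ (2 / 3 : ℝ) := by
            rw [← Real.rpow_mul t.cast_nonneg]; norm_num
        _ ≤ (n : ℝ) ^ (2 / 3 : ℝ) := by gcongr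
    push_cast
    linarith
  calc (ramseyK5eStar n : ℝ) ≤ (n : ℝ) ^ (515 * t ^ 2) := by
        exact_mod_cast ramseyK5eStar_le_pow ht2 htn hnt
    _ ≤ (n : ℝ) ^ (515 * (n : ℝ) ^ (2 / 3 : ℝ)) := by
        rw [← Real.rpow_natCast]
        exact Real.rpow_le_rpow_of_exponent_le hnR hexp
    _ = 2 ^ (515 * (n : ℝ) ^ (2 / 3 : ℝ) * Real.logb 2 n) := by
        rw [mul_comm _ (Real.logb 2 n), Real.rpow_mul two_pos.le,
          Real.rpow_logb two_pos (by norm_num) (by linarith)]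

end RamseyNumber

section ReedSolomon

open Polynomial in
theorem exists_reedSolomon_code {C F ι : Type*} [Fintype C] [Field F] [Fintype F] [DecidableEq F]
    [Fintype ι] {D : ℕ} (hι : Fintype.card ι ≤ Fintype.card F)
    (hC : Fintype.card C ≤ Fintype.card F ^ D) :
    ∃ z : C → ι → F, ∀ c d, c ≠ d → #{i | z c i = z d i} < D := by
  obtain ⟨x⟩ := Function.Embedding.nonempty_of_card_le hι
  obtain ⟨coeff⟩ : Nonempty (C ↪ (Fin D → F)) :=
    Function.Embedding.nonempty_of_card_le (by simpa using hC)
  set p : C → degreeLT F D := fun c => (degreeLTEquiv F D).symm (coeff c)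
  refine ⟨fun c i => (p c : F[X]).eval (x i), fun c d hcd => ?_⟩
  by_contra! hD
  have hp : p c = p d := by
    refine Subtype.ext (eq_of_degree_sub_lt_of_eval_finset_eq
      (({i | (p c : F[X]).eval (x i) = (p d : F[X]).eval (x i)} : Finset ι).map x) ?_ ?_)
    · rw [card_map]
      exact (mem_degreeLT.mp (p c - p d).2).trans_le (by exact_mod_cast hD)
    · simp
  exact hcd (coeff.injective ((degreeLTEquiv F D).symm.injective hp))

end ReedSolomon

section UnionBound

variable {Q Ω : Type*} [Fintype Ω] {δ : ℝ}

theorem card_filter_forall_notMem_le [Fintype Q] [DecidableEq Q] [DecidableEq Ω]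
    {E : Finset Q} {G : Q → Finset Ω} (hG : ∀ q ∈ E, δ * Fintype.card Ω ≤ #(G q)) :
    (#{ω : Q → Ω | ∀ q ∈ E, ω q ∉ G q} : ℝ) ≤ Real.exp (-(δ * #E)) * Fintype.card (Q → Ω) := by
  have hpi : ({ω : Q → Ω | ∀ q ∈ E, ω q ∉ G q} : Finset (Q → Ω)) =
      Fintype.piFinset fun q => if q ∈ E then (G q)ᶜ else univ := by
    ext ω
    simp only [mem_filter_univ, Fintype.mem_piFinset]
    exact forall_congr' fun q => by split_ifs with hq <;> simp [hq]
  calc (#{ω : Q → Ω | ∀ q ∈ E, ω q ∉ G q} : ℝ)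
      = ∏ q, (#(if q ∈ E then (G q)ᶜ else univ) : ℝ) := by
        rw [hpi, Fintype.card_piFinset, Nat.cast_prod]
    _ ≤ ∏ q, (if q ∈ E then Real.exp (-δ) else 1) * (Fintype.card Ω : ℝ) := by
        refine prod_le_prod (fun _ _ => Nat.cast_nonneg _) fun q _ => ?_
        split_ifs with hq
        · rw [card_compl, Nat.cast_sub (card_le_univ _)]
          have := Real.one_sub_le_exp_neg δ
          nlinarith [hG q hq, (Fintype.card Ω).cast_nonneg (α := ℝ)]
        · simp
    _ = Real.exp (-(δ * #E)) * Fintype.card (Q → Ω) := by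
        rw [prod_mul_distrib, prod_ite_mem, univ_inter, prod_const, prod_const, card_univ,
          Fintype.card_fun, ← Real.exp_nat_mul]
        push_cast
        ring_nf

theorem exists_forall_exists_mem_of_card_lt_exp [Finite Q] [Nonempty Ω] {α : Type*} {I : Finset α}
    {E : α → Finset Q} {G : α → Q → Finset Ω} {B L : ℕ} (hB : 0 < B)
    (hE : ∀ i ∈ I, L * B ≤ #(E i)) (hG : ∀ i ∈ I, ∀ q ∈ E i, Fintype.card Ω ≤ B * #(G i q))
    (hI : #I < Real.exp L) : ∃ ω : Q → Ω, ∀ i ∈ I, ∃ q ∈ E i, ω q ∈ G i q := by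
  classical
  have := Fintype.ofFinite Q
  by_contra! hbad
  have hcover : (univ : Finset (Q → Ω)) ⊆ I.biUnion fun i => {ω | ∀ q ∈ E i, ω q ∉ G i q} :=
    fun ω _ => by simpa using hbad ω
  have hB' : (0 : ℝ) < B := by exact_mod_cast hB
  have : (0 : ℝ) < Fintype.card (Q → Ω) := by exact_mod_cast Fintype.card_pos
  refine lt_irrefl (Fintype.card (Q → Ω) : ℝ) ?_
  calc (Fintype.card (Q → Ω) : ℝ)
      ≤ ∑ i ∈ I, (#{ω : Q → Ω | ∀ q ∈ E i, ω q ∉ G i q} : ℝ) := by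
        exact_mod_cast (card_le_card hcover).trans card_biUnion_le
    _ ≤ ∑ _i ∈ I, Real.exp (-L) * Fintype.card (Q → Ω) := by
        refine sum_le_sum fun i hi => (card_filter_forall_notMem_le (δ := (B : ℝ)⁻¹)
          fun q hq => ?_).trans ?_
        · rw [inv_mul_le_iff₀ hB']
          exact_mod_cast hG i hi q hq
        · gcongr
          rw [le_inv_mul_iff₀' hB']
          exact_mod_cast hE i hi
    _ = #I * Real.exp (-L) * Fintype.card (Q → Ω) := by
        rw [sum_const, nsmul_eq_mul, mul_assoc]
    _ < 1 * Fintype.card (Q → Ω) := by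
        gcongr
        rw [Real.exp_neg, ← div_eq_mul_inv, div_lt_one (Real.exp_pos _)]
        exact hI
    _ = Fintype.card (Q → Ω) := one_mul _

end UnionBound

section FirstDiff

variable {ι : Type*} [ConditionallyCompleteLinearOrderBot ι]

/-- The first coordinate in which two bit strings differ (`sInf ∅` when they are equal). -/
def firstDiff (a b : ι → Bool) : ι :=
  sInf {i | a i ≠ b i}

theorem firstDiff_comm (a b : ι → Bool) : firstDiff a b = firstDiff b a := by
  simp only [firstDiff, ne_comm]

theorem apply_eq_of_lt_firstDiff {a b : ι → Bool} {i : ι} (h : i < firstDiff a b) : a i = b i :=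
  not_not.mp (notMem_of_lt_csInf' h)

theorem apply_firstDiff_ne [WellFoundedLT ι] {a b : ι → Bool} (h : a ≠ b) :
    a (firstDiff a b) ≠ b (firstDiff a b) :=
  csInf_mem (Function.ne_iff.mp h)

theorem firstDiff_lt_of_eq [WellFoundedLT ι] {a c d : ι → Bool} (hac : a ≠ c) (had : a ≠ d)
    (hcd : c ≠ d) (h : firstDiff a c = firstDiff a d) : firstDiff a c < firstDiff c d := by
  by_contra! hle
  have hne := apply_firstDiff_ne hcd
  obtain hlt | heq := hle.lt_or_eq
  · exact hne ((apply_eq_of_lt_firstDiff hlt).symm.trans (apply_eq_of_lt_firstDiff (h ▸ hlt)))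
  · have hc := apply_firstDiff_ne hac
    have hd := apply_firstDiff_ne had
    rw [← h, ← heq] at hd
    rw [← heq] at hc
    cases ha : a (firstDiff c d) <;> simp_all

end FirstDiff

section RedTriples

variable {ι P : Type*} [ConditionallyCompleteLinearOrderBot ι]

/-- The label of a pair of vertices of the cube `ι → Bool`: a coordinate, a symbol of the code and
a bit string. It prescribes which vertices form a red triple with the pair. -/
abbrev PairLabel (ι P : Type*) : Type _ :=
  ι × P × (ι → Bool)

/-- The vertex `a` is an apex over the pair `{c, d}` with label `o`, relative to the code `z`:
`a` branches off from `c` and `d` at the coordinate `o.1`, its codeword carries the symbol `o.2.1`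
at the place where `c` and `d` differ first, and `a` agrees with the bit string `o.2.2` wherever the
codewords of `c` and `d` agree. -/
structure IsApex (z : (ι → Bool) → ι → P) (o : PairLabel ι P) (a c d : ι → Bool) : Prop where
  firstDiff_left : firstDiff a c = o.1
  firstDiff_right : firstDiff a d = o.1
  code_firstDiff : z a (firstDiff c d) = o.2.1
  apply_eq : ∀ i, z c i = z d i → a i = o.2.2 i

/-- The red triples determined by the code `z` and the pair labels `ω`: some vertex of the triple is
an apex over the other two. -/
def IsRedTriple (z : (ι → Bool) → ι → P) (ω : Sym2 (ι → Bool) → PairLabel ι P)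
    (T : Finset (ι → Bool)) : Prop :=
  ∃ a ∈ T, ∀ c ∈ T, ∀ d ∈ T, c ≠ a → d ≠ a → c ≠ d → IsApex z (ω s(c, d)) a c d

variable {z : (ι → Bool) → ι → P} {ω : Sym2 (ι → Bool) → PairLabel ι P} {o : PairLabel ι P}
  {a b c d : ι → Bool}

theorem IsApex.symm (h : IsApex z o a c d) : IsApex z o a d c where
  firstDiff_left := h.firstDiff_right
  firstDiff_right := h.firstDiff_left
  code_firstDiff := firstDiff_comm c d ▸ h.code_firstDiff
  apply_eq i hi := h.apply_eq i hi.symm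

theorem IsApex.firstDiff_lt [WellFoundedLT ι] (hac : a ≠ c) (had : a ≠ d) (hcd : c ≠ d)
    (h : IsApex z o a c d) : firstDiff a c < firstDiff c d :=
  firstDiff_lt_of_eq hac had hcd (h.firstDiff_left.trans h.firstDiff_right.symm)

theorem IsApex.isRedTriple [DecidableEq (ι → Bool)] (h : IsApex z (ω s(c, d)) a c d) :
    IsRedTriple z ω {a, c, d} := by
  refine ⟨a, by simp, fun x hx y hy hxa hya hxy => ?_⟩
  simp only [mem_insert, mem_singleton, hxa, hya, false_or] at hx hy
  obtain rfl | rfl := hx <;> obtain rfl | rfl := hy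
  · exact absurd rfl hxy
  · exact h
  · exact Sym2.eq_swap ▸ h.symm
  · exact absurd rfl hxy

theorem IsRedTriple.isApex [WellFoundedLT ι] [DecidableEq (ι → Bool)] (hac : a ≠ c) (had : a ≠ d)
    (hcd : c ≠ d) (hc : firstDiff a c ≤ firstDiff c d) (hd : firstDiff a d ≤ firstDiff c d)
    (h : IsRedTriple z ω {a, c, d}) : IsApex z (ω s(c, d)) a c d := by
  obtain ⟨x, hx, hapex⟩ := h
  simp only [mem_insert, mem_singleton] at hx
  obtain rfl | rfl | rfl := hx
  · exact hapex c (by simp) d (by simp) hac.symm had.symm hcd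
  · have hlt := (hapex a (by simp) d (by simp) hac hcd.symm had).symm.firstDiff_lt
      hcd hac.symm had.symm
    rw [firstDiff_comm d a] at hlt
    exact absurd hd hlt.not_ge
  · have hlt := (hapex a (by simp) c (by simp) had hcd hac).symm.firstDiff_lt
      hcd.symm had.symm hac.symm
    rw [firstDiff_comm _ c, firstDiff_comm c a] at hlt
    exact absurd hc hlt.not_ge

theorem IsApex.not_isApex_of_isApex [WellFoundedLT ι] {o' : PairLabel ι P} (hcd : c ≠ d)
    (ha : IsApex z o a c d) (hb : IsApex z o b c d) (hc : IsApex z o' c a b) :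
    ¬ IsApex z o' d a b := fun hd =>
  have hsymbol := ha.code_firstDiff.trans hb.code_firstDiff.symm
  apply_firstDiff_ne hcd ((hc.apply_eq _ hsymbol).trans (hd.apply_eq _ hsymbol).symm)

/-- If every triple of `Q` is red and `c`, `d` have the latest first difference in `Q`, then the
remaining two vertices `a`, `b` are apexes over `{c, d}`; these branch off from `c` and `d` before
they part from each other, so `c`, `d` are apexes over `{a, b}` in turn. -/
theorem exists_subset_not_isRedTriple [WellFoundedLT ι] (z : (ι → Bool) → ι → P)
    (ω : Sym2 (ι → Bool) → PairLabel ι P) {Q : Finset (ι → Bool)} (hQ : #Q = 4) :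
    ∃ T ⊆ Q, #T = 3 ∧ ¬ IsRedTriple z ω T := by
  classical
  by_contra! hred
  obtain ⟨⟨c, d⟩, hcdQ, hmax⟩ := exists_max_image Q.offDiag (fun p => firstDiff p.1 p.2)
    (card_pos.mp (by simp [offDiag_card, hQ]))
  obtain ⟨hc, hd, hcd⟩ := mem_offDiag.mp hcdQ
  have hle {x y} (hx : x ∈ Q) (hy : y ∈ Q) (hxy : x ≠ y) : firstDiff x y ≤ firstDiff c d :=
    hmax (x, y) (mem_offDiag.mpr ⟨hx, hy, hxy⟩)
  have htriple {x y w} (hx : x ∈ Q) (hy : y ∈ Q) (hw : w ∈ Q) (hxy : x ≠ y) (hxw : x ≠ w)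
      (hyw : y ≠ w) : IsRedTriple z ω {x, y, w} :=
    hred _ (by simp [insert_subset_iff, *]) (card_eq_three.mpr ⟨x, y, w, hxy, hxw, hyw, rfl⟩)
  have hcard : #((Q.erase c).erase d) = 2 := by
    rw [card_erase_of_mem (mem_erase.mpr ⟨hcd.symm, hd⟩), card_erase_of_mem hc, hQ]
  obtain ⟨a, b, hab, hrest⟩ := card_eq_two.mp hcard
  obtain ⟨had, hac, ha⟩ : a ≠ d ∧ a ≠ c ∧ a ∈ Q := by
    simpa only [mem_erase] using (hrest ▸ by simp : a ∈ (Q.erase c).erase d)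
  obtain ⟨hbd, hbc, hb⟩ : b ≠ d ∧ b ≠ c ∧ b ∈ Q := by
    simpa only [mem_erase] using (hrest ▸ by simp : b ∈ (Q.erase c).erase d)
  have haApex := (htriple ha hc hd hac had hcd).isApex hac had hcd (hle ha hc hac) (hle ha hd had)
  have hbApex := (htriple hb hc hd hbc hbd hcd).isApex hbc hbd hcd (hle hb hc hbc) (hle hb hd hbd)
  have hapex {x} (hx : x ∈ Q) (hxa : x ≠ a) (hxb : x ≠ b)
      (heq : firstDiff a x = firstDiff b x) : IsApex z (ω s(a, b)) x a b := by
    rw [firstDiff_comm a, firstDiff_comm b] at heq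
    have hlt := firstDiff_lt_of_eq hxa hxb hab heq
    exact (htriple hx ha hb hxa hxb hab).isApex hxa hxb hab hlt.le (heq ▸ hlt.le)
  exact haApex.not_isApex_of_isApex hcd hbApex
    (hapex hc hac.symm hbc.symm (haApex.firstDiff_left.trans hbApex.firstDiff_left.symm))
    (hapex hd had.symm hbd.symm (haApex.firstDiff_right.trans hbApex.firstDiff_right.symm))

end RedTriples

section RandomLabels

theorem card_filter_forall_apply_eq {ι α : Type*} [Fintype ι] [DecidableEq ι] [Fintype α]
    [DecidableEq α] (A : Finset ι) (f : ι → α) :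
    #{g : ι → α | ∀ i ∈ A, f i = g i} = Fintype.card α ^ #Aᶜ := by
  have hpi : ({g : ι → α | ∀ i ∈ A, f i = g i} : Finset (ι → α)) =
      Fintype.piFinset fun i => if i ∈ A then {f i} else univ := by
    ext g
    simp only [mem_filter_univ, Fintype.mem_piFinset]
    exact forall_congr' fun i => by split_ifs with hi <;> simp [hi, eq_comm]
  simp [hpi, apply_ite card, prod_ite, ← compl_filter]

theorem card_univ_product_powersetCard_le (α : Type*) [Fintype α] (k : ℕ) :
    #(univ ×ˢ powersetCard k univ : Finset (α × Finset α)) ≤ Fintype.card α ^ (k + 1) := by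
  rw [card_product, card_powersetCard, card_univ, pow_succ']
  gcongr
  exact Nat.choose_le_pow _ _

theorem two_pow_lt_exp {n : ℕ} (hn : n ≠ 0) : (2 : ℝ) ^ n < Real.exp n := by
  rw [← Real.exp_one_pow]
  exact pow_lt_pow_left₀ Real.exp_one_gt_two two_pos.le hn

variable {ι P : Type*} [ConditionallyCompleteLinearOrderBot ι] [Fintype ι] [Fintype P]
  {z : (ι → Bool) → ι → P} {D : ℕ}

open Classical in
theorem card_pairLabel_le_mul_card_filter_isApex [DecidableEq P] {v c d : ι → Bool}
    (hv : firstDiff v c = firstDiff v d) (hD : #{i | z c i = z d i} ≤ D) :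
    Fintype.card (PairLabel ι P) ≤
      Fintype.card ι * Fintype.card P * 2 ^ D * #{o : PairLabel ι P | IsApex z o v c d} := by
  set A : Finset ι := {i | z c i = z d i} with hA
  have hbits : 2 ^ #Aᶜ ≤ #{o : PairLabel ι P | IsApex z o v c d} := by
    rw [← Fintype.card_bool, ← card_filter_forall_apply_eq A v]
    refine card_le_card_of_injOn (fun g => (firstDiff v c, z v (firstDiff c d), g)) (fun g hg => ?_)
      fun g _ g' _ h => by simpa using h
    simp only [coe_filter_univ, Set.mem_ofPred_eq, hA, mem_filter_univ] at hg ⊢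
    exact ⟨rfl, hv.symm, rfl, hg⟩
  calc Fintype.card (PairLabel ι P)
      = Fintype.card ι * Fintype.card P * (2 ^ #A * 2 ^ #Aᶜ) := by
        simp [← pow_add, card_add_card_compl, mul_assoc]
    _ ≤ Fintype.card ι * Fintype.card P * (2 ^ D * 2 ^ #Aᶜ) := by gcongr; norm_num
    _ = Fintype.card ι * Fintype.card P * 2 ^ D * 2 ^ #Aᶜ := by ring
    _ ≤ _ := by gcongr

theorem exists_pairLabel [Nonempty P] [DecidableEq P]
    (hz : ∀ c d, c ≠ d → #{i | z c i = z d i} ≤ D) {k : ℕ}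
    (hk : Fintype.card ι * (k + 1) * (Fintype.card ι * Fintype.card P * 2 ^ D) ≤ k.choose 2) :
    ∃ ω : Sym2 (ι → Bool) → PairLabel ι P, ∀ v S, #S = k → (∃ i, ∀ c ∈ S, firstDiff v c = i) →
      ∃ c ∈ S, ∃ d ∈ S, c ≠ d ∧ IsApex z (ω s(c, d)) v c d := by
  classical
  set B := Fintype.card ι * Fintype.card P * 2 ^ D
  have hB : 0 < B := mul_pos (mul_pos Fintype.card_pos Fintype.card_pos) (by positivity)
  set I : Finset ((ι → Bool) × Finset (ι → Bool)) :=
    {p ∈ univ ×ˢ powersetCard k univ | ∃ i, ∀ c ∈ p.2, firstDiff p.1 c = i} with hI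
  set E : (ι → Bool) × Finset (ι → Bool) → Finset (Sym2 (ι → Bool)) :=
    fun p => p.2.offDiag.image (Function.uncurry Sym2.mk)
  set G : (ι → Bool) × Finset (ι → Bool) → Sym2 (ι → Bool) → Finset (PairLabel ι P) :=
    fun p q => {o | ∃ c ∈ p.2, ∃ d ∈ p.2, s(c, d) = q ∧ c ≠ d ∧ IsApex z o p.1 c d}
  have hE : ∀ p ∈ I, Fintype.card ι * (k + 1) * B ≤ #(E p) := fun p hp => by
    simp only [hI, mem_filter, mem_product, mem_powersetCard] at hp
    rwa [Sym2.card_image_offDiag, hp.1.2.2]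
  have hG : ∀ p ∈ I, ∀ q ∈ E p, Fintype.card (PairLabel ι P) ≤ B * #(G p q) := by
    rintro ⟨v, S⟩ hS q hq
    obtain ⟨i, hi⟩ := (mem_filter.mp hS).2
    obtain ⟨⟨c, d⟩, hcd, rfl⟩ := mem_image.mp hq
    obtain ⟨hc, hd, hcd⟩ := mem_offDiag.mp hcd
    refine (card_pairLabel_le_mul_card_filter_isApex ((hi c hc).trans (hi d hd).symm)
      (hz c d hcd)).trans (Nat.mul_le_mul_left _ (card_le_card fun o ho => ?_))
    exact (mem_filter_univ o).mpr ⟨c, hc, d, hd, rfl, hcd, (mem_filter_univ o).mp ho⟩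
  have hIcard : #I ≤ 2 ^ (Fintype.card ι * (k + 1)) := by
    refine (card_filter_le _ _).trans ((card_univ_product_powersetCard_le _ k).trans_eq ?_)
    rw [Fintype.card_fun, Fintype.card_bool, ← pow_mul]
  have hIexp : (#I : ℝ) < Real.exp (Fintype.card ι * (k + 1) : ℕ) :=
    lt_of_le_of_lt (by exact_mod_cast hIcard)
      (two_pow_lt_exp (Nat.mul_ne_zero Fintype.card_ne_zero k.succ_ne_zero))
  obtain ⟨ω, hω⟩ := exists_forall_exists_mem_of_card_lt_exp hB hE hG hIexp
  refine ⟨ω, fun v S hS hv => ?_⟩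
  obtain ⟨q, -, hq⟩ := hω (v, S) (by simp [hI, hS, hv])
  obtain ⟨c, hc, d, hd, rfl, hcd, hapex⟩ := (mem_filter_univ _).mp hq
  exact ⟨c, hc, d, hd, hcd, hapex⟩

end RandomLabels

section RedK5e

theorem not_hasRedK5e {N : ℕ} {χ : Finset (Fin N) → Bool}
    (h : ∀ Q : Finset (Fin N), #Q = 4 → ∃ T ⊆ Q, #T = 3 ∧ χ T = false) : ¬ HasRedK5e N χ := by
  rintro ⟨S, hS, hred⟩
  have herase : ∀ x ∈ S, ∃ T ∈ S.powersetCard 3, x ∉ T ∧ χ T = false := fun x hx => by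
    obtain ⟨T, hTS, hT3, hT⟩ := h (S.erase x) (by rw [card_erase_of_mem hx, hS])
    obtain ⟨hTS, hxT⟩ := subset_erase.mp hTS
    exact ⟨T, mem_powersetCard.mpr ⟨hTS, hT3⟩, hxT, hT⟩
  obtain ⟨x, hx⟩ := card_pos.mp (by omega : 0 < #S)
  obtain ⟨T, hTS, -, hT⟩ := herase x hx
  obtain ⟨y, hy⟩ := card_pos.mp (by rw [(mem_powersetCard.mp hTS).2]; decide : 0 < #T)
  obtain ⟨T', hT'S, hyT', hT'⟩ := herase y ((mem_powersetCard.mp hTS).1 hy)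
  have hblue : 1 < #{U ∈ S.powersetCard 3 | ¬ χ U = true} :=
    one_lt_card.mpr ⟨T, mem_filter.mpr ⟨hTS, by simp [hT]⟩,
      T', mem_filter.mpr ⟨hT'S, by simp [hT']⟩, fun h => hyT' (h ▸ hy)⟩
  have hsplit := card_filter_add_card_filter_not (s := S.powersetCard 3) (χ · = true)
  have hten : #(S.powersetCard 3) = 10 := by rw [card_powersetCard, hS]; rfl
  omega

end RedK5e

section LowerBound

variable {ι P : Type*} [ConditionallyCompleteLinearOrderBot ι] {z : (ι → Bool) → ι → P}
  {ω : Sym2 (ι → Bool) → PairLabel ι P} {N : ℕ} {f : Fin N ↪ (ι → Bool)}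

open Classical in
/-- The colouring of the vertices `Fin N`, placed in the cube `ι → Bool` by `f`, in which the red
triples are those determined by the code `z` and the pair labels `ω`. -/
noncomputable def tripleColoring (z : (ι → Bool) → ι → P) (ω : Sym2 (ι → Bool) → PairLabel ι P)
    (f : Fin N ↪ (ι → Bool)) (T : Finset (Fin N)) : Bool :=
  decide (IsRedTriple z ω (T.map f))

theorem not_hasRedK5e_tripleColoring [WellFoundedLT ι] : ¬ HasRedK5e N (tripleColoring z ω f) :=
  not_hasRedK5e fun Q hQ => by
    obtain ⟨U, hUQ, hU, hblue⟩ := exists_subset_not_isRedTriple z ω ((card_map f).trans hQ)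
    obtain ⟨T, hTQ, rfl⟩ := subset_map_iff.mp hUQ
    exact ⟨T, hTQ, (card_map f).symm.trans hU, by simpa [tripleColoring] using hblue⟩

theorem not_hasBlueStar_tripleColoring [Fintype ι] {k n : ℕ} (hn : Fintype.card ι * k < n)
    (hω : ∀ v S, #S = k + 1 → (∃ i, ∀ c ∈ S, firstDiff v c = i) →
      ∃ c ∈ S, ∃ d ∈ S, c ≠ d ∧ IsApex z (ω s(c, d)) v c d) :
    ¬ HasBlueStar N n (tripleColoring z ω f) := by
  classical
  rintro ⟨v, S, -, hS, hblue⟩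
  obtain ⟨i, -, hi⟩ := exists_lt_card_fiber_of_mul_lt_card_of_maps_to (n := k)
    (f := firstDiff (f v)) (s := S.map f) (t := univ) (fun _ _ => mem_univ _)
    (by rwa [card_univ, card_map, hS])
  obtain ⟨U, hU, hUk⟩ := exists_subset_card_eq hi
  obtain ⟨c, hc, d, hd, hcd, hapex⟩ := hω (f v) U hUk ⟨i, fun c hc => (mem_filter.mp (hU hc)).2⟩
  obtain ⟨a, ha, rfl⟩ := mem_map.mp (mem_filter.mp (hU hc)).1
  obtain ⟨b, hb, rfl⟩ := mem_map.mp (mem_filter.mp (hU hd)).1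
  refine of_decide_eq_false (hblue a ha b hb (f.injective.ne_iff.mp hcd)) ?_
  simpa only [map_insert, map_singleton] using hapex.isRedTriple

theorem sq_le_two_pow {D : ℕ} (hD : 4 ≤ D) : D ^ 2 ≤ 2 ^ D := by
  induction D, hD using Nat.le_induction with
  | base => norm_num
  | succ D hD ih =>
    rw [pow_succ 2]
    nlinarith

theorem exists_not_hasRedK5e_not_hasBlueStar {D n : ℕ} (hD : 4 ≤ D) (hn : 2 ^ (6 * D) ≤ n)
    (hN : N ≤ 2 ^ D ^ 2) :
    ∃ χ : Finset (Fin N) → Bool, ¬ HasRedK5e N χ ∧ ¬ HasBlueStar N n χ := by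
  classical
  have : NeZero (D ^ 2) := ⟨by positivity⟩
  have := Fintype.ofFinite (GaloisField 2 D)
  have hF : Fintype.card (GaloisField 2 D) = 2 ^ D := by
    rw [← Nat.card_eq_fintype_card, GaloisField.card 2 D (by omega)]
  have hsq := sq_le_two_pow hD
  obtain ⟨z, hz⟩ := exists_reedSolomon_code (C := Fin (D ^ 2) → Bool) (ι := Fin (D ^ 2))
    (F := GaloisField 2 D) (D := D) (by rwa [hF, Fintype.card_fin])
    (by simp [hF, ← pow_mul, sq])
  set x := D ^ 2 * (D ^ 2 * 2 ^ D * 2 ^ D)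
  have hk : D ^ 2 * (4 * x + 1 + 1) * (D ^ 2 * 2 ^ D * 2 ^ D) ≤ (4 * x + 1).choose 2 := by
    rw [Nat.choose_two_right, Nat.le_div_iff_mul_le two_pos, Nat.add_sub_cancel]
    calc D ^ 2 * (4 * x + 1 + 1) * (D ^ 2 * 2 ^ D * 2 ^ D) * 2 = (4 * x + 2) * x * 2 := by ring
      _ ≤ (4 * x + 1) * (4 * x) := by nlinarith
  obtain ⟨ω, hω⟩ := exists_pairLabel (z := z) (fun c d hcd => (hz c d hcd).le)
    (by rwa [Fintype.card_fin, hF])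
  obtain ⟨f⟩ : Nonempty (Fin N ↪ (Fin (D ^ 2) → Bool)) :=
    Function.Embedding.nonempty_of_card_le (by simpa using hN)
  refine ⟨tripleColoring z ω f, not_hasRedK5e_tripleColoring,
    not_hasBlueStar_tripleColoring (lt_of_lt_of_le ?_ hn) hω⟩
  calc Fintype.card (Fin (D ^ 2)) * (4 * x) = 2 ^ 2 * (D ^ 2) ^ 3 * 2 ^ (2 * D) := by
        rw [Fintype.card_fin]; ring
    _ ≤ 2 ^ 2 * (2 ^ D) ^ 3 * 2 ^ (2 * D) := by gcongr
    _ = 2 ^ (5 * D + 2) := by ring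
    _ < 2 ^ (6 * D) := by gcongr <;> omega

theorem rpow_le_ramseyK5eStar {n : ℕ} (hn : 2 ^ 24 ≤ n) :
    (2 : ℝ) ^ (1 / 64 * Real.logb 2 n ^ 2) ≤ ramseyK5eStar n := by
  set D := Nat.log 2 n / 6
  have hlog : 24 ≤ Nat.log 2 n := Nat.le_log_of_pow_le one_lt_two hn
  have hD : 4 ≤ D := by omega
  have hDn : 2 ^ (6 * D) ≤ n := Nat.pow_le_of_le_log (by omega) (by omega)
  have hlogb : Real.logb 2 n ≤ 8 * D := by
    have hlt : n < 2 ^ (8 * D) := Nat.lt_pow_of_log_lt one_lt_two (by omega)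
    rw [Real.logb_le_iff_le_rpow one_lt_two (by exact_mod_cast (by omega : 0 < n))]
    exact_mod_cast hlt.le
  have hlogb0 : 0 ≤ Real.logb 2 n :=
    Real.logb_nonneg one_lt_two (by exact_mod_cast (by omega : 1 ≤ n))
  calc (2 : ℝ) ^ (1 / 64 * Real.logb 2 n ^ 2) ≤ 2 ^ ((D ^ 2 : ℕ) : ℝ) := by
        gcongr
        · exact one_le_two
        · push_cast
          nlinarith
    _ ≤ ramseyK5eStar n := by
        rw [Real.rpow_natCast]
        exact_mod_cast (lt_ramseyK5eStar fun N hN =>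
          exists_not_hasRedK5e_not_hasBlueStar hD hDn hN).le

end LowerBound

end

/-- There are `c, c' > 0` such that for all sufficiently large `n`:
`2^(c (log₂ n)²) ≤ r(K₅⁽³⁾ − e, Sₙ) ≤ 2^(c' n^(2/3) log₂ n)`. -/
theorem K5e_star_bounds :
    ∃ c : ℝ, ∃ c' : ℝ, 0 < c ∧ 0 < c' ∧ ∃ n₀ : ℕ, ∀ n : ℕ, n₀ ≤ n →
      (2 : ℝ) ^ (c * (Real.logb 2 n) ^ 2) ≤ (ramseyK5eStar n : ℝ) ∧
      (ramseyK5eStar n : ℝ) ≤ (2 : ℝ) ^ (c' * (n : ℝ) ^ ((2 : ℝ) / 3) * Real.logb 2 n) := by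
  refine ⟨1 / 64, 515, by norm_num, by norm_num, 2 ^ 24, fun n hn => ⟨?_, ?_⟩⟩
  · exact rpow_le_ramseyK5eStar hn
  · exact ramseyK5eStar_le_rpow (le_trans (by norm_num) hn)
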